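/- arXiv:1407.6448 — 2 statements merged into one kernel-verified Lean document; each statement's English description precedes it below -/
import Mathlib

section
/- Assume conditions (A), (S), (S)₂ and (K). Then the system is uniformly dissipative of type (1,1): there exists a constant c > 0 such that for every r ≥ 0, every ω ∈ S^{n−1}, every λ ∈ ℂ and every nonzero φ ∈ ℂᵐ satisfying (λA⁰ + i r A(ω) + L)φ = 0, one has Re λ ≤ −c ρ(r), where ρ(r) = r²/(1 + r²). -/
open Matrix BigOperators Finset

noncomputable section

/-- Complexification of a real matrix. -/
def cmap {a b : ℕ} (X : Matrix (Fin a) (Fin b) ℝ) : Matrix (Fin a) (Fin b) ℂ :=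
  X.map (fun x => (x : ℂ))

/-- Real part of the standard Hermitian inner product `⟨x, y⟩ = ∑ xᵢ conj yᵢ` on `ℂᵐ`. -/
def reIP {m : ℕ} (x y : Fin m → ℂ) : ℝ := (∑ i, x i * (starRingEnd ℂ) (y i)).re

/-- Symmetric part `X₁ = (X + Xᵀ)/2` of a real square matrix. -/
def symP {m : ℕ} (X : Matrix (Fin m) (Fin m) ℝ) : Matrix (Fin m) (Fin m) ℝ :=
  (2⁻¹ : ℝ) • (X + Xᵀ)

/-- Skew-symmetric part `X₂ = (X − Xᵀ)/2` of a real square matrix. -/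
def skewP {m : ℕ} (X : Matrix (Fin m) (Fin m) ℝ) : Matrix (Fin m) (Fin m) ℝ :=
  (2⁻¹ : ℝ) • (X - Xᵀ)

/-- Kernel of (the complexification of) a real matrix, as a subset of `ℂᵐ`. -/
def kerC {m : ℕ} (L : Matrix (Fin m) (Fin m) ℝ) : Set (Fin m → ℂ) :=
  {z | (cmap L).mulVec z = 0}

/-- Euclidean norm on `ℂᵐ`. -/
def cnrm {m : ℕ} (z : Fin m → ℂ) : ℝ := Real.sqrt (∑ i, Complex.normSq (z i))

/-- the quadratic form of a real matrix on complex vectors -/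
def qf {m : ℕ} (X : Matrix (Fin m) (Fin m) ℝ) (z : Fin m → ℂ) : ℂ :=
  ((cmap X).mulVec z) ⬝ᵥ star z

/-!
If `z ≠ 0` and `(λ A⁰ + i r A(ω) + L) z = 0`, applying a multiplier `T` with `T A⁰` self-adjoint and
taking the real part of the inner product with `z` gives the energy identity
`Re λ ⟨T A⁰ z, z⟩ + r Re ⟨i T A(ω) z, z⟩ + Re ⟨T L z, z⟩ = 0`. Normalise `‖z‖ = 1`.

* `T = 1` gives `Re λ ≤ 0`; put `μ = -Re λ`.
* `T = S + 1` gives `Re ⟨(S L + L) z, z⟩ ≤ C μ`. A nonnegative form dominates the squared norm of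
  any operator vanishing on its null vectors, so also `‖L z‖² ≤ C μ`.
* `T = -i K(ω)` gives `r Re ⟨K(ω) A(ω) z, z⟩ ≤ C (μ + ‖L z‖)`. By compactness, adding a multiple of
  the form of `S L + L` makes the form of `K(ω) A(ω)` uniformly coercive, whence
  `c r ≤ C ((1 + r) μ + √μ)`, and solving for `μ` yields `μ ≥ c' r² / (1 + r²)`.
-/

open Complex ContinuousLinearMap WithLp

open scoped ComplexStarModule

lemma exists_comp_eq_of_ker_le_ker {k U V W : Type*} [DivisionRing k] [AddCommGroup U]
    [AddCommGroup V] [AddCommGroup W] [Module k U] [Module k V] [Module k W]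
    {f : U →ₗ[k] V} {g : U →ₗ[k] W} (h : LinearMap.ker f ≤ LinearMap.ker g) :
    ∃ φ : V →ₗ[k] W, φ ∘ₗ f = g := by
  obtain ⟨σ, hσ⟩ := f.rangeRestrict.exists_rightInverse_of_surjective f.range_rangeRestrict
  obtain ⟨φ, hφ⟩ := LinearMap.exists_extend (g ∘ₗ σ)
  refine ⟨φ, LinearMap.ext fun u => ?_⟩
  have hfσ : f (σ (f.rangeRestrict u)) = f u :=
    congrArg Subtype.val (LinearMap.congr_fun hσ (f.rangeRestrict u))
  have hgσ : g (σ (f.rangeRestrict u)) = g u :=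
    LinearMap.sub_mem_ker_iff.1 (h (LinearMap.sub_mem_ker_iff.2 hfσ))
  exact (LinearMap.congr_fun hφ (f.rangeRestrict u)).trans hgσ

section QuadraticForm

section RCLike

variable {𝕜 E : Type*} [RCLike 𝕜] [NormedAddCommGroup E] [InnerProductSpace 𝕜 E]

lemma reApplyInnerSelf_add_clm (T U : E →L[𝕜] E) (z : E) :
    (T + U).reApplyInnerSelf z = T.reApplyInnerSelf z + U.reApplyInnerSelf z := by
  simp [reApplyInnerSelf_apply, inner_add_left]

lemma reApplyInnerSelf_real_smul_clm [NormedSpace ℝ E] [SMulCommClass 𝕜 ℝ E] [IsScalarTower ℝ 𝕜 E]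
    (a : ℝ) (T : E →L[𝕜] E) (z : E) :
    (a • T).reApplyInnerSelf z = a * T.reApplyInnerSelf z := by
  simp [reApplyInnerSelf_apply, inner_smul_left_eq_smul, RCLike.smul_re]

lemma abs_reApplyInnerSelf_le (T : E →L[𝕜] E) (z : E) : |T.reApplyInnerSelf z| ≤ ‖T z‖ * ‖z‖ :=
  (RCLike.abs_re_le_norm _).trans (norm_inner_le_norm _ _)

lemma reApplyInnerSelf_le_opNorm (T : E →L[𝕜] E) {z : E} (hz : ‖z‖ = 1) :
    T.reApplyInnerSelf z ≤ ‖T‖ := by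
  simpa [rayleighQuotient, hz] using (le_abs_self _).trans (T.rayleighQuotient_le_norm z)

lemma continuousOn_reApplyInnerSelf {X : Type*} [TopologicalSpace X] {s : Set X}
    {T : X → E →L[𝕜] E} {f : X → E} (hT : ContinuousOn T s) (hf : ContinuousOn f s) :
    ContinuousOn (fun x => (T x).reApplyInnerSelf (f x)) s :=
  RCLike.continuous_re.comp_continuousOn
    (continuous_inner.comp_continuousOn ((hT.clm_apply hf).prodMk hf))

variable [CompleteSpace E]

lemma reApplyInnerSelf_star (T : E →L[𝕜] E) (z : E) :
    (star T).reApplyInnerSelf z = T.reApplyInnerSelf z := by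
  rw [reApplyInnerSelf_apply, reApplyInnerSelf_apply, star_eq_adjoint, adjoint_inner_left,
    inner_re_symm]

end RCLike

variable {E : Type*} [NormedAddCommGroup E] [InnerProductSpace ℂ E] [CompleteSpace E]

lemma reApplyInnerSelf_smul_of_isSelfAdjoint {T : E →L[ℂ] E} (hT : IsSelfAdjoint T) (a : ℂ)
    (z : E) : (a • T).reApplyInnerSelf z = a.re * T.reApplyInnerSelf z := by
  have him : (inner ℂ (T z) z).im = 0 := hT.isSymmetric.im_inner_apply_self z
  simp [reApplyInnerSelf_apply, inner_smul_left, him]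

lemma reApplyInnerSelf_realPart (T : E →L[ℂ] E) (z : E) :
    (ℜ T : E →L[ℂ] E).reApplyInnerSelf z = T.reApplyInnerSelf z := by
  rw [realPart_apply_coe, reApplyInnerSelf_real_smul_clm, reApplyInnerSelf_add_clm,
    reApplyInnerSelf_star]
  ring

lemma exists_realPart_eq_star_mul_self {T : E →L[ℂ] E} (hT : ∀ z, 0 ≤ T.reApplyInnerSelf z) :
    ∃ Q : E →L[ℂ] E, (ℜ T : E →L[ℂ] E) = star Q * Q := by
  refine CStarAlgebra.nonneg_iff_eq_star_mul_self.1 ((nonneg_iff_isPositive _).2 ?_)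
  exact isPositive_def'.2 ⟨(ℜ T).2, fun z => (hT z).trans_eq (reApplyInnerSelf_realPart T z).symm⟩

lemma reApplyInnerSelf_eq_norm_sq {T Q : E →L[ℂ] E} (h : (ℜ T : E →L[ℂ] E) = star Q * Q) (z : E) :
    T.reApplyInnerSelf z = ‖Q z‖ ^ 2 := by
  rw [← reApplyInnerSelf_realPart, h]
  exact (Q.apply_norm_sq_eq_inner_adjoint_left z).symm

lemma realPart_apply_eq_zero {T : E →L[ℂ] E} (hT : ∀ z, 0 ≤ T.reApplyInnerSelf z) {z : E}
    (hz : T.reApplyInnerSelf z = 0) : (ℜ T : E →L[ℂ] E) z = 0 := by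
  obtain ⟨Q, hQ⟩ := exists_realPart_eq_star_mul_self hT
  have hQz : Q z = 0 := by simpa [reApplyInnerSelf_eq_norm_sq hQ] using hz
  simp [hQ, hQz]

end QuadraticForm

lemma exists_norm_sq_le_mul_reApplyInnerSelf {E F : Type*} [NormedAddCommGroup E]
    [InnerProductSpace ℂ E] [FiniteDimensional ℂ E] [NormedAddCommGroup F] [NormedSpace ℂ F]
    {T : E →L[ℂ] E} {L : E →L[ℂ] F}
    (hT : ∀ z, 0 ≤ T.reApplyInnerSelf z) (hL : ∀ z, T.reApplyInnerSelf z = 0 → L z = 0) :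
    ∃ C ≥ 0, ∀ z, ‖L z‖ ^ 2 ≤ C * T.reApplyInnerSelf z := by
  have := FiniteDimensional.complete ℂ E
  obtain ⟨Q, hQ⟩ := exists_realPart_eq_star_mul_self hT
  have hker : LinearMap.ker Q.toLinearMap ≤ LinearMap.ker L.toLinearMap := fun z hz =>
    hL z (by simpa [reApplyInnerSelf_eq_norm_sq hQ] using hz)
  obtain ⟨φ, hφ⟩ := exists_comp_eq_of_ker_le_ker hker
  refine ⟨‖LinearMap.toContinuousLinearMap φ‖ ^ 2, by positivity, fun z => ?_⟩
  rw [reApplyInnerSelf_eq_norm_sq hQ, ← mul_pow,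
    show L z = LinearMap.toContinuousLinearMap φ (Q z) from (LinearMap.congr_fun hφ z).symm]
  gcongr
  exact le_opNorm _ _

lemma exists_norm_eq_one_apply_eq_zero {𝕜 E F : Type*} [RCLike 𝕜] [NormedAddCommGroup E]
    [NormedSpace 𝕜 E] [AddCommGroup F] [Module 𝕜 F] {T : E →ₗ[𝕜] F} {z : E} (hz : z ≠ 0)
    (hT : T z = 0) : ∃ u : E, ‖u‖ = 1 ∧ T u = 0 :=
  ⟨(‖z‖⁻¹ : 𝕜) • z, norm_smul_inv_norm hz, by simp [hT]⟩

section Compactness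

lemma exists_pos_le_add_mul_of_isCompact {X : Type*} [TopologicalSpace X] {s : Set X}
    (hs : IsCompact s) {f g : X → ℝ} (hf : ContinuousOn f s) (hg : ContinuousOn g s)
    (hf0 : ∀ x ∈ s, 0 ≤ f x) (hfg : ∀ x ∈ s, f x = 0 → 0 < g x) :
    ∃ c > 0, ∃ C ≥ 0, ∀ x ∈ s, c ≤ g x + C * f x := by
  obtain ⟨D, hD⟩ := hs.exists_bound_of_continuousOn hg
  obtain ⟨c, hc, hmax⟩ : ∃ c > 0, ∀ x ∈ s, c ≤ max (f x) (g x) :=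
    hs.exists_forall_le' (hf.sup hg) fun x hx =>
      (hf0 x hx).eq_or_lt.elim (fun h => lt_max_of_lt_right (hfg x hx h.symm)) lt_max_of_lt_left
  refine ⟨c, hc, |c + D| / c, by positivity, fun x hx => ?_⟩
  have hgD : -D ≤ g x := neg_le_of_abs_le (hD x hx)
  rcases le_max_iff.1 (hmax x hx) with hcf | hcg
  · have : |c + D| ≤ |c + D| / c * f x := by
      rw [div_mul_eq_mul_div, le_div_iff₀ hc]
      gcongr
    linarith [le_abs_self (c + D)]
  · have := mul_nonneg (div_nonneg (abs_nonneg (c + D)) hc.le) (hf0 x hx)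
    linarith

lemma exists_pos_le_reApplyInnerSelf_add_mul {𝕜 E : Type*} [RCLike 𝕜] [NormedAddCommGroup E]
    [InnerProductSpace 𝕜 E] [FiniteDimensional 𝕜 E] {X : Type*} [TopologicalSpace X]
    {s : Set X} (hs : IsCompact s) {T : E →L[𝕜] E} {M : X → E →L[𝕜] E} (hM : ContinuousOn M s)
    (hT : ∀ z, 0 ≤ T.reApplyInnerSelf z)
    (hTM : ∀ x ∈ s, ∀ z ≠ 0, T.reApplyInnerSelf z = 0 → 0 < (M x).reApplyInnerSelf z) :
    ∃ c > 0, ∃ C ≥ 0, ∀ x ∈ s, ∀ z, ‖z‖ = 1 →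
      c ≤ (M x).reApplyInnerSelf z + C * T.reApplyInnerSelf z := by
  have := FiniteDimensional.proper 𝕜 E
  obtain ⟨c, hc, C, hC, hcC⟩ := exists_pos_le_add_mul_of_isCompact
    (hs.prod (isCompact_sphere (0 : E) 1))
    (f := fun p => T.reApplyInnerSelf p.2) (g := fun p => (M p.1).reApplyInnerSelf p.2)
    (T.reApplyInnerSelf_continuous.comp continuous_snd).continuousOn
    (continuousOn_reApplyInnerSelf (hM.comp continuousOn_fst fun p hp => hp.1) continuousOn_snd)
    (fun p _ => hT p.2)
    (fun p hp => hTM p.1 hp.1 p.2 (ne_zero_of_mem_unit_sphere ⟨p.2, hp.2⟩))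
  exact ⟨c, hc, C, hC, fun x hx z hz => hcC (x, z) ⟨hx, mem_sphere_zero_iff_norm.2 hz⟩⟩

lemma isCompact_sum_sq_eq_one (ι : Type*) [Fintype ι] :
    IsCompact {ω : ι → ℝ | ∑ j, ω j ^ 2 = 1} := by
  have h := isCompact_sphere (0 : EuclideanSpace ℝ ι) 1
  rw [EuclideanSpace.sphere_zero_eq 1 zero_le_one, one_pow] at h
  exact (EuclideanSpace.equiv ι ℝ).symm.toHomeomorph.isCompact_preimage.2 h

end Compactness

lemma exists_pos_mul_div_one_add_sq_le {c e : ℝ} (hc : 0 < c) (he : 0 ≤ e) (a b : ℝ) :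
    ∃ d > 0, ∀ r μ h : ℝ, 0 ≤ r → 0 ≤ μ → h ^ 2 ≤ e * μ → c * r ≤ (a + b * r) * μ + h →
      d * (r ^ 2 / (1 + r ^ 2)) ≤ μ := by
  refine ⟨c ^ 2 / (c ^ 2 + 2 * (a ^ 2 + b ^ 2) + 2 * e), by positivity,
    fun r μ h hr hμ hh hcr => ?_⟩
  rw [div_mul_div_comm, div_le_iff₀ (by positivity)]
  have hsq : c ^ 2 * r ^ 2 ≤ 2 * (a ^ 2 + b ^ 2) * (1 + r ^ 2) * μ ^ 2 + 2 * e * μ := calc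
    c ^ 2 * r ^ 2 = (c * r) ^ 2 := by ring
    _ ≤ ((a + b * r) * μ + h) ^ 2 := by gcongr
    _ ≤ 2 * (((a + b * r) * μ) ^ 2 + h ^ 2) := add_sq_le
    _ ≤ 2 * (a ^ 2 + b ^ 2) * (1 + r ^ 2) * μ ^ 2 + 2 * e * μ := by
      nlinarith [mul_nonneg (sq_nonneg (a * r - b)) (sq_nonneg μ)]
  -- For `μ ≥ 1` the bound is trivial since `r ^ 2 / (1 + r ^ 2) ≤ 1`; otherwise `μ ^ 2 ≤ μ`.
  rcases le_total μ 1 with hμ1 | hμ1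
  · have hμ2 : 2 * (a ^ 2 + b ^ 2) * (1 + r ^ 2) * μ ^ 2 ≤
        2 * (a ^ 2 + b ^ 2) * (1 + r ^ 2) * μ := by
      gcongr
      exact pow_le_of_le_one hμ hμ1 two_ne_zero
    have : 0 ≤ e * μ * r ^ 2 := by positivity
    have : 0 ≤ c ^ 2 * μ * (1 + r ^ 2) := by positivity
    linarith
  · calc c ^ 2 * r ^ 2 ≤ 1 * ((c ^ 2 + 2 * (a ^ 2 + b ^ 2) + 2 * e) * (1 + r ^ 2)) := by
          rw [one_mul]
          gcongr
          · linarith [sq_nonneg a, sq_nonneg b]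
          · linarith
      _ ≤ μ * ((c ^ 2 + 2 * (a ^ 2 + b ^ 2) + 2 * e) * (1 + r ^ 2)) := by gcongr

section Dissipativity

variable {E : Type*} [NormedAddCommGroup E] [InnerProductSpace ℂ E] [CompleteSpace E]

lemma re_mul_reApplyInnerSelf_add_eq_zero {A0 A L T : E →L[ℂ] E}
    (hT : IsSelfAdjoint (T * A0)) {r : ℝ} {lam : ℂ} {z : E}
    (h : (lam • A0 + (r * I) • A + L) z = 0) :
    lam.re * (T * A0).reApplyInnerSelf z + r * (I • (T * A)).reApplyInnerSelf z +
      (T * L).reApplyInnerSelf z = 0 := by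
  have hop : T * (lam • A0 + (r * I) • A + L) = lam • (T * A0) + r • (I • (T * A)) + T * L := by
    simp [mul_add, mul_smul]
  rw [← reApplyInnerSelf_smul_of_isSelfAdjoint hT, ← reApplyInnerSelf_real_smul_clm,
    ← reApplyInnerSelf_add_clm, ← reApplyInnerSelf_add_clm, ← hop, reApplyInnerSelf_apply,
    mul_apply_eq_comp, h, map_zero, inner_zero_left, map_zero]

lemma re_nonpos_of_apply_eq_zero {A0 A L : E →L[ℂ] E} (hA0 : IsSelfAdjoint A0)
    (hA : IsSelfAdjoint A) {r : ℝ} {lam : ℂ} {z : E}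
    (h : (lam • A0 + (r * I) • A + L) z = 0) (hA0z : 0 < A0.reApplyInnerSelf z)
    (hLz : 0 ≤ L.reApplyInnerSelf z) : lam.re ≤ 0 := by
  have henergy := re_mul_reApplyInnerSelf_add_eq_zero (T := 1) (by simpa using hA0) h
  simp only [one_mul, reApplyInnerSelf_smul_of_isSelfAdjoint hA, I_re, zero_mul, mul_zero,
    add_zero] at henergy
  exact nonpos_of_mul_nonpos_left (by linarith) hA0z

lemma reApplyInnerSelf_mul_le {A0 A L T : E →L[ℂ] E} (hT : IsSelfAdjoint (T * A0))
    {r : ℝ} (hr : 0 ≤ r) {lam : ℂ} (hlam : lam.re ≤ 0) {z : E} (hz : ‖z‖ = 1)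
    (h : (lam • A0 + (r * I) • A + L) z = 0) (hTA : 0 ≤ (I • (T * A)).reApplyInnerSelf z) :
    (T * L).reApplyInnerSelf z ≤ ‖T * A0‖ * -lam.re := by
  have henergy := re_mul_reApplyInnerSelf_add_eq_zero hT h
  have hA0z : (T * A0).reApplyInnerSelf z * -lam.re ≤ ‖T * A0‖ * -lam.re :=
    mul_le_mul_of_nonneg_right (reApplyInnerSelf_le_opNorm _ hz) (by linarith)
  linarith [mul_nonneg hr hTA]

lemma mul_reApplyInnerSelf_mul_le {A0 A L K : E →L[ℂ] E}
    (hK : K * A0 ∈ skewAdjoint (E →L[ℂ] E)) {r : ℝ} {lam : ℂ} (hlam : lam.re ≤ 0) {z : E}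
    (hz : ‖z‖ = 1) (h : (lam • A0 + (r * I) • A + L) z = 0) :
    r * (K * A).reApplyInnerSelf z ≤ ‖K‖ * (‖A0‖ * -lam.re + ‖L z‖) := by
  -- Multiplying by `-I` makes the skew-adjoint `K * A0` self-adjoint and cancels the factor `I` in
  -- front of `A`.
  have hsa : IsSelfAdjoint (((-I) • K) * A0) := by
    rw [smul_mul_assoc, neg_smul]
    exact (isSelfAdjoint_I_smul_iff_mem_skewAdjoint.2 hK).neg
  have henergy := re_mul_reApplyInnerSelf_add_eq_zero hsa h
  have hKA : I • (((-I) • K) * A) = K * A := by simp [smul_smul]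
  have hKA0 : (((-I) • K) * A0).reApplyInnerSelf z * -lam.re ≤ ‖K‖ * ‖A0‖ * -lam.re := by
    refine mul_le_mul_of_nonneg_right ((reApplyInnerSelf_le_opNorm _ hz).trans ?_) (by linarith)
    simpa [norm_smul] using norm_mul_le K A0
  have hKL : |(((-I) • K) * L).reApplyInnerSelf z| ≤ ‖K‖ * ‖L z‖ := by
    refine (abs_reApplyInnerSelf_le _ z).trans ?_
    simpa [norm_smul, hz] using K.le_opNorm (L z)
  rw [hKA] at henergy
  linarith [neg_le_of_abs_le hKL]

lemma reApplyInnerSelf_mul_add_le {A0 A L S : E →L[ℂ] E} (hA0 : IsSelfAdjoint A0)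
    (hA : IsSelfAdjoint A) (hSA0 : IsSelfAdjoint (S * A0)) {r : ℝ} (hr : 0 ≤ r) {lam : ℂ}
    (hlam : lam.re ≤ 0) {z : E} (hz : ‖z‖ = 1) (h : (lam • A0 + (r * I) • A + L) z = 0)
    (hSA : 0 ≤ (I • (S * A)).reApplyInnerSelf z) :
    (S * L + L).reApplyInnerSelf z ≤ ‖S * A0 + A0‖ * -lam.re := by
  have hTA : 0 ≤ (I • ((S + 1) * A)).reApplyInnerSelf z := by
    simpa [add_mul, reApplyInnerSelf_add_clm, reApplyInnerSelf_smul_of_isSelfAdjoint hA] using hSA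
  simpa [add_mul] using
    reApplyInnerSelf_mul_le (by simpa [add_mul] using hSA0.add hA0) hr hlam hz h hTA

theorem uniform_dissipativity_type_one_one_general [FiniteDimensional ℂ E] {X : Type*}
    [TopologicalSpace X] {s : Set X} (hs : IsCompact s) {A0 L S : E →L[ℂ] E} {A K : X → E →L[ℂ] E}
    (hA : ContinuousOn A s) (hK : ContinuousOn K s)
    (hA0sa : IsSelfAdjoint A0) (hAsa : ∀ x ∈ s, IsSelfAdjoint (A x))
    (hA0pos : ∀ z ≠ 0, 0 < A0.reApplyInnerSelf z) (hLnn : ∀ z, 0 ≤ L.reApplyInnerSelf z)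
    (hSA0 : IsSelfAdjoint (S * A0)) (hSLnn : ∀ z, 0 ≤ (S * L + L).reApplyInnerSelf z)
    (hSLker : ∀ z, (S * L + L).reApplyInnerSelf z = 0 → L z = 0)
    (hSA : ∀ x ∈ s, ∀ z, 0 ≤ (I • (S * A x)).reApplyInnerSelf z)
    (hKA0 : ∀ x ∈ s, K x * A0 ∈ skewAdjoint (E →L[ℂ] E))
    (hKpos : ∀ x ∈ s, ∀ z, L z = 0 → z ≠ 0 → 0 < (K x * A x).reApplyInnerSelf z) :
    ∃ c > (0 : ℝ), ∀ r : ℝ, 0 ≤ r → ∀ x ∈ s, ∀ lam : ℂ, ∀ z : E, z ≠ 0 →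
      (lam • A0 + (r * I) • A x + L) z = 0 → lam.re ≤ -(c * (r ^ 2 / (1 + r ^ 2))) := by
  set a := ‖S * A0 + A0‖
  obtain ⟨C, hC, hLC⟩ := exists_norm_sq_le_mul_reApplyInnerSelf hSLnn hSLker
  obtain ⟨κ, hκ⟩ := hs.exists_bound_of_continuousOn hK
  obtain ⟨c, hc, D, hD, hcD⟩ := exists_pos_le_reApplyInnerSelf_add_mul hs (hK.mul hA) hSLnn
    fun x hx z hz hz0 => hKpos x hx z (hSLker z hz0) hz
  obtain ⟨d, hd, hdρ⟩ := exists_pos_mul_div_one_add_sq_le hc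
    (e := κ ^ 2 * (C * a)) (by positivity) (κ * ‖A0‖) (D * a)
  refine ⟨d, hd, fun r hr x hx lam z hz h => ?_⟩
  obtain ⟨u, hu, hu0⟩ :=
    exists_norm_eq_one_apply_eq_zero (T := (lam • A0 + (r * I) • A x + L).toLinearMap) hz h
  have hlam : lam.re ≤ 0 := re_nonpos_of_apply_eq_zero hA0sa (hAsa x hx) hu0
    (hA0pos u (norm_ne_zero_iff.1 (by simp [hu]))) (hLnn u)
  have hμ : 0 ≤ -lam.re := neg_nonneg.2 hlam
  have hSLu : (S * L + L).reApplyInnerSelf u ≤ a * -lam.re :=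
    reApplyInnerSelf_mul_add_le hA0sa (hAsa x hx) hSA0 hr hlam hu hu0 (hSA x hx u)
  have hLu : (κ * ‖L u‖) ^ 2 ≤ κ ^ 2 * (C * a) * -lam.re := calc
    (κ * ‖L u‖) ^ 2 = κ ^ 2 * ‖L u‖ ^ 2 := mul_pow _ _ _
    _ ≤ κ ^ 2 * (C * (a * -lam.re)) := by gcongr; exact (hLC u).trans (by gcongr)
    _ = κ ^ 2 * (C * a) * -lam.re := by ring
  have hcr : c * r ≤ (κ * ‖A0‖ + D * a * r) * -lam.re + κ * ‖L u‖ := calc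
    c * r ≤ ((K x * A x).reApplyInnerSelf u + D * (S * L + L).reApplyInnerSelf u) * r := by
      gcongr; exact hcD x hx u hu
    _ = r * (K x * A x).reApplyInnerSelf u + D * (S * L + L).reApplyInnerSelf u * r := by ring
    _ ≤ κ * (‖A0‖ * -lam.re + ‖L u‖) + D * (a * -lam.re) * r :=
      add_le_add ((mul_reApplyInnerSelf_mul_le (hKA0 x hx) hlam hu hu0).trans
        (mul_le_mul_of_nonneg_right (hκ x hx) (by positivity))) (by gcongr)
    _ = (κ * ‖A0‖ + D * a * r) * -lam.re + κ * ‖L u‖ := by ring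
  exact le_neg_of_le_neg (hdρ r (-lam.re) (κ * ‖L u‖) hr hμ hLu hcr)

end Dissipativity

section Complexification

variable {m : ℕ}

/-- The operator on `ℂᵐ` with its Hermitian inner product defined by a real matrix. Bundling it as
a real star-algebra homomorphism makes it compatible with products, transposes and linear
combinations. -/
def complexifyCLM (m : ℕ) : Matrix (Fin m) (Fin m) ℝ →⋆ₐ[ℝ]
    (EuclideanSpace ℂ (Fin m) →L[ℂ] EuclideanSpace ℂ (Fin m)) :=
  (StarAlgHomClass.toStarAlgHom (toEuclideanCLM (n := Fin m) (𝕜 := ℂ))).restrictScalars ℝ |>.comp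
    { (Complex.ofRealAm.mapMatrix : Matrix (Fin m) (Fin m) ℝ →ₐ[ℝ] Matrix (Fin m) (Fin m) ℂ) with
      map_star' := fun X => by ext; simp }

lemma toEuclideanCLM_cmap (X : Matrix (Fin m) (Fin m) ℝ) :
    toEuclideanCLM (𝕜 := ℂ) (cmap X) = complexifyCLM m X := rfl

lemma reIP_mulVec (M : Matrix (Fin m) (Fin m) ℂ) (z : Fin m → ℂ) :
    reIP (M *ᵥ z) z = (toEuclideanCLM (𝕜 := ℂ) M).reApplyInnerSelf (toLp 2 z) := by
  simp [reIP, reApplyInnerSelf_apply, EuclideanSpace.inner_eq_star_dotProduct, dotProduct, mul_comm]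

lemma mem_kerC_iff {X : Matrix (Fin m) (Fin m) ℝ} {z : Fin m → ℂ} :
    z ∈ kerC X ↔ complexifyCLM m X (toLp 2 z) = 0 :=
  (toLp_eq_zero 2).symm

lemma pencil_mulVec_eq_zero_iff (A0 A L : Matrix (Fin m) (Fin m) ℝ) (a b : ℂ) (z : Fin m → ℂ) :
    (a • cmap A0 + b • cmap A + cmap L) *ᵥ z = 0 ↔
      (a • complexifyCLM m A0 + b • complexifyCLM m A + complexifyCLM m L) (toLp 2 z) = 0 := by
  simp only [← toEuclideanCLM_cmap, ← map_smul, ← map_add]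
  exact (toLp_eq_zero 2).symm

lemma reIP_cmap_mulVec (X : Matrix (Fin m) (Fin m) ℝ) (z : Fin m → ℂ) :
    reIP (cmap X *ᵥ z) z = (complexifyCLM m X).reApplyInnerSelf (toLp 2 z) := by
  rw [reIP_mulVec, toEuclideanCLM_cmap]

lemma complexifyCLM_transpose (X : Matrix (Fin m) (Fin m) ℝ) :
    complexifyCLM m Xᵀ = star (complexifyCLM m X) := by
  rw [← conjTranspose_eq_transpose_of_trivial, ← star_eq_conjTranspose, map_star]

lemma isSelfAdjoint_complexifyCLM {X : Matrix (Fin m) (Fin m) ℝ} (hX : Xᵀ = X) :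
    IsSelfAdjoint (complexifyCLM m X) := by
  rw [IsSelfAdjoint, ← complexifyCLM_transpose, hX]

lemma complexifyCLM_mem_skewAdjoint {X : Matrix (Fin m) (Fin m) ℝ} (hX : Xᵀ = -X) :
    complexifyCLM m X ∈ skewAdjoint (EuclideanSpace ℂ (Fin m) →L[ℂ] EuclideanSpace ℂ (Fin m)) := by
  rw [skewAdjoint.mem_iff, ← complexifyCLM_transpose, hX, map_neg]

lemma continuous_complexifyCLM : Continuous (complexifyCLM m) :=
  (complexifyCLM m).toAlgHom.toLinearMap.continuous_of_finiteDimensional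

lemma symP_add (X Y : Matrix (Fin m) (Fin m) ℝ) : symP (X + Y) = symP X + symP Y := by
  simp only [symP, transpose_add, ← smul_add, add_add_add_comm]

lemma complexifyCLM_symP (X : Matrix (Fin m) (Fin m) ℝ) :
    complexifyCLM m (symP X) = ℜ (complexifyCLM m X) := by
  rw [realPart_apply_coe, symP, map_smul, map_add, complexifyCLM_transpose]

lemma reIP_symP_mulVec (X : Matrix (Fin m) (Fin m) ℝ) (z : Fin m → ℂ) :
    reIP (cmap (symP X) *ᵥ z) z = (complexifyCLM m X).reApplyInnerSelf (toLp 2 z) := by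
  rw [reIP_cmap_mulVec, complexifyCLM_symP, reApplyInnerSelf_realPart]

lemma I_smul_complexifyCLM_skewP (X : Matrix (Fin m) (Fin m) ℝ) :
    I • complexifyCLM m (skewP X) = ℜ (I • complexifyCLM m X) := by
  rw [realPart_apply_coe, skewP, map_smul, map_sub, complexifyCLM_transpose, star_smul, smul_comm]
  simp only [star_def, conj_I]
  module

lemma reIP_I_smul_skewP_mulVec (X : Matrix (Fin m) (Fin m) ℝ) (z : Fin m → ℂ) :
    reIP ((I • cmap (skewP X)) *ᵥ z) z = (I • complexifyCLM m X).reApplyInnerSelf (toLp 2 z) := by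
  rw [reIP_mulVec, map_smul, toEuclideanCLM_cmap, I_smul_complexifyCLM_skewP,
    reApplyInnerSelf_realPart]

lemma mem_kerC_symP {X : Matrix (Fin m) (Fin m) ℝ}
    (hX : ∀ z, 0 ≤ reIP (cmap (symP X) *ᵥ z) z) {z : Fin m → ℂ}
    (hz : (complexifyCLM m X).reApplyInnerSelf (toLp 2 z) = 0) : z ∈ kerC (symP X) := by
  rw [mem_kerC_iff, complexifyCLM_symP]
  exact realPart_apply_eq_zero (fun w => (hX (ofLp w)).trans_eq (reIP_symP_mulVec X _)) hz

end Complexification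

/-- **Theorem 2.2 (decay property of the standard type, pointwise estimate).**
Under conditions (A), (S), (S)₂ and (K), solutions of `A⁰û′ + i r A(ω) û + L û = 0` satisfy
`|û(t)| ≤ C e^{−c ρ(r) t} |û(0)|` with `η(r) = r²/(1+r²)²`. -/
theorem uniform_dissipativity_type_one_one
    (m n : ℕ) (hm : 1 ≤ m) (hn : 1 ≤ n)
    (A0 : Matrix (Fin m) (Fin m) ℝ) (A : Fin n → Matrix (Fin m) (Fin m) ℝ)
    (L : Matrix (Fin m) (Fin m) ℝ)
    -- condition (A)
    (hA0sym : A0ᵀ = A0) (hAsym : ∀ j, (A j)ᵀ = A j)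
    (hA0pos : ∀ z : Fin m → ℂ, z ≠ 0 → 0 < reIP ((cmap A0).mulVec z) z)
    (hLnn : ∀ z : Fin m → ℂ, 0 ≤ reIP ((cmap L).mulVec z) z)
    (hLker : ∃ z : Fin m → ℂ, z ≠ 0 ∧ z ∈ kerC L)
    -- condition (S)
    (S : Matrix (Fin m) (Fin m) ℝ)
    (hSA0 : (S * A0)ᵀ = S * A0)
    (hSLnn : ∀ z : Fin m → ℂ, 0 ≤ reIP ((cmap (symP (S * L) + symP L)).mulVec z) z)
    (hSLker : kerC (symP (S * L) + symP L) = kerC L)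
    -- condition (S)₂ : `i(SA(ω))₂ ≥ 0` on `ℂᵐ`
    (hS2 : ∀ ω : Fin n → ℝ, (∑ j, ω j ^ 2 = 1) → ∀ z : Fin m → ℂ,
      0 ≤ reIP ((Complex.I • cmap (skewP (S * (∑ j, ω j • A j)))).mulVec z) z)
    -- condition (K): a smooth compensating matrix family
    (K : (Fin n → ℝ) → Matrix (Fin m) (Fin m) ℝ)
    (hKsmooth : ∀ i j, ContDiff ℝ (⊤ : ℕ∞) (fun ω => K ω i j))
    (hKodd : ∀ ω : Fin n → ℝ, (∑ j, ω j ^ 2 = 1) → K (-ω) = - K ω)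
    (hKA0 : ∀ ω : Fin n → ℝ, (∑ j, ω j ^ 2 = 1) → (K ω * A0)ᵀ = -(K ω * A0))
    (hKpos : ∀ ω : Fin n → ℝ, (∑ j, ω j ^ 2 = 1) → ∀ z ∈ kerC L, z ≠ 0 →
      0 < reIP ((cmap (symP (K ω * (∑ j, ω j • A j)))).mulVec z) z) :
    ∃ c > (0:ℝ), ∀ r : ℝ, 0 ≤ r → ∀ ω : Fin n → ℝ, (∑ j, ω j ^ 2 = 1) →
      ∀ lam : ℂ, ∀ phi : Fin m → ℂ, phi ≠ 0 →
      (lam • cmap A0 + ((r : ℂ) * Complex.I) • cmap (∑ j, ω j • A j) + cmap L).mulVec phi = 0 →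
      lam.re ≤ -(c * (r ^ 2 / (1 + r ^ 2))) := by
  simp only [← symP_add] at hSLnn hSLker
  have hker : ∀ z, (complexifyCLM m (S * L + L)).reApplyInnerSelf z = 0 →
      complexifyCLM m L z = 0 := fun z hz =>
    mem_kerC_iff.1 (hSLker ▸ mem_kerC_symP hSLnn (z := ofLp z) hz)
  simp only [reIP_cmap_mulVec] at hA0pos hLnn
  simp only [reIP_symP_mulVec, reIP_I_smul_skewP_mulVec, map_mul, map_add] at hSLnn hS2 hKpos hker
  have hKcont : Continuous K := continuous_matrix fun i j => (hKsmooth i j).continuous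
  obtain ⟨c, hc, hdecay⟩ := uniform_dissipativity_type_one_one_general
    (isCompact_sum_sq_eq_one (Fin n)) (A0 := complexifyCLM m A0)
    (L := complexifyCLM m L) (S := complexifyCLM m S)
    (A := fun ω => complexifyCLM m (∑ j, ω j • A j)) (K := fun ω => complexifyCLM m (K ω))
    (continuous_complexifyCLM.comp (by fun_prop)).continuousOn
    (continuous_complexifyCLM.comp hKcont).continuousOn
    (isSelfAdjoint_complexifyCLM hA0sym)
    (fun ω _ => isSelfAdjoint_complexifyCLM (by simp [transpose_sum, hAsym]))
    (fun z hz => hA0pos (ofLp z) (by simpa using hz)) (fun z => hLnn (ofLp z))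
    (by simpa using isSelfAdjoint_complexifyCLM hSA0) (fun z => hSLnn (ofLp z)) hker
    (fun ω hω z => hS2 ω hω (ofLp z))
    (fun ω hω => by simpa using complexifyCLM_mem_skewAdjoint (hKA0 ω hω))
    (fun ω hω z hLz hz => hKpos ω hω (ofLp z) (mem_kerC_iff.2 hLz) (by simpa using hz))
  exact ⟨c, hc, fun r hr ω hω lam phi hphi h => hdecay r hr ω hω lam (toLp 2 phi)
    (by simpa using hphi) ((pencil_mulVec_eq_zero_iff ..).1 h)⟩
end
end

section
/- Assume A⁰ is invertible and that condition (C) holds: Q(ω)(A⁰)⁻¹A(ω) = 0, R(A⁰)⁻¹L = 0, and Q(ω)(A⁰)⁻¹L + R(A⁰)⁻¹A(ω) = 0 for each ω ∈ S^{n−1}. Let r ≥ 0, ω ∈ S^{n−1}, and let û : [0,∞) → ℂᵐ be differentiable with A⁰û′(t) + i r A(ω) û(t) + L û(t) = 0 for all t ≥ 0. If the constraint i r Q(ω)û(0) + R û(0) = 0 holds at t = 0, then i r Q(ω)û(t) + R û(t) = 0 for all t ≥ 0. -/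
open Matrix BigOperators Finset

noncomputable section

/-!
Condition (C) says exactly that `(c Q(ω) + R) (A⁰)⁻¹ (c A(ω) + L) = 0` as a polynomial in `c`.
Applying `(c Q(ω) + R) (A⁰)⁻¹` to the equation at `c = i r` therefore leaves
`(i r Q(ω) + R) û′ = 0`, so the constraint `i r Q(ω) û + R û` is a conserved quantity.
-/

section Algebra

variable {ι κ K S : Type*} [Fintype ι] [DecidableEq ι] [CommRing K] [CommRing S]

theorem map_nonsing_inv_of_isUnit_det (f : K →+* S) {E : Matrix ι ι K} (hE : IsUnit E.det) :
    E⁻¹.map f = (E.map f)⁻¹ := by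
  refine (Matrix.inv_eq_left_inv ?_).symm
  rw [← Matrix.map_mul, Matrix.nonsing_inv_mul E hE, Matrix.map_one f f.map_zero f.map_one]

theorem isUnit_det_map (f : K →+* S) {E : Matrix ι ι K} (hE : IsUnit E.det) :
    IsUnit (E.map f).det := by
  simpa only [RingHom.map_det, RingHom.mapMatrix_apply] using hE.map f

theorem mulVec_eq_zero_of_mul_inv_mul_eq_zero {E B : Matrix ι ι K} {M : Matrix κ ι K}
    (hE : IsUnit E.det) (hM : M * E⁻¹ * B = 0) {v w : ι → K} (h : E *ᵥ w + B *ᵥ v = 0) :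
    M *ᵥ w = 0 :=
  calc M *ᵥ w = (M * E⁻¹ * E) *ᵥ w := by rw [Matrix.nonsing_inv_mul_cancel_right _ _ hE]
    _ = (M * E⁻¹) *ᵥ -(B *ᵥ v) := by rw [← Matrix.mulVec_mulVec, eq_neg_of_add_eq_zero_left h]
    _ = 0 := by rw [Matrix.mulVec_neg, Matrix.mulVec_mulVec, hM, Matrix.zero_mulVec, neg_zero]

/-- Condition (C) in one fixed direction `ω`: the arguments stand for `A⁰`, `A(ω)`, `L`, `Q(ω)`
and `R`, and the fields are named after the coefficients of the polynomial
`(c Q(ω) + R) (A⁰)⁻¹ (c A(ω) + L)` in `c`. -/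
structure ConditionC (E A L : Matrix ι ι K) (Q R : Matrix κ ι K) : Prop where
  coeff_two : Q * E⁻¹ * A = 0
  coeff_zero : R * E⁻¹ * L = 0
  coeff_one : Q * E⁻¹ * L + R * E⁻¹ * A = 0

namespace ConditionC

variable {E A L : Matrix ι ι K} {Q R : Matrix κ ι K}

theorem map (h : ConditionC E A L Q R) (f : K →+* S) (hE : IsUnit E.det) :
    ConditionC (E.map f) (A.map f) (L.map f) (Q.map f) (R.map f) where
  coeff_two := by
    rw [← map_nonsing_inv_of_isUnit_det f hE, ← Matrix.map_mul, ← Matrix.map_mul,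
      h.coeff_two, Matrix.map_zero f f.map_zero]
  coeff_zero := by
    rw [← map_nonsing_inv_of_isUnit_det f hE, ← Matrix.map_mul, ← Matrix.map_mul,
      h.coeff_zero, Matrix.map_zero f f.map_zero]
  coeff_one := by
    simp only [← map_nonsing_inv_of_isUnit_det f hE, ← Matrix.map_mul]
    rw [← Matrix.map_add f f.map_add, h.coeff_one, Matrix.map_zero f f.map_zero]

theorem smul_add_mul_inv_mul_smul_add (h : ConditionC E A L Q R) (c : K) :
    (c • Q + R) * E⁻¹ * (c • A + L) = 0 :=
  calc (c • Q + R) * E⁻¹ * (c • A + L)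
      = c • c • (Q * E⁻¹ * A) + c • (Q * E⁻¹ * L + R * E⁻¹ * A) + R * E⁻¹ * L := by
        simp only [Matrix.add_mul, Matrix.mul_add, Matrix.smul_mul, Matrix.mul_smul, smul_add]
        abel
    _ = 0 := by
        rw [h.coeff_two, h.coeff_one, h.coeff_zero]
        simp only [smul_zero, add_zero]

end ConditionC

end Algebra

section Analysis

theorem hasDerivWithinAt_const_dotProduct {𝕜 𝔸 ι : Type*} [Fintype ι]
    [NontriviallyNormedField 𝕜] [NormedRing 𝔸] [NormedAlgebra 𝕜 𝔸] (v : ι → 𝔸)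
    {u : 𝕜 → ι → 𝔸} {u' : ι → 𝔸} {s : Set 𝕜} {t : 𝕜} (hu : HasDerivWithinAt u u' s t) :
    HasDerivWithinAt (fun x => v ⬝ᵥ u x) (v ⬝ᵥ u') s t :=
  HasDerivWithinAt.fun_sum fun j _ => (hasDerivWithinAt_pi.1 hu j).const_mul (v j)

theorem eq_of_hasDerivWithinAt_eq_zero {F : Type*} [NormedAddCommGroup F] [NormedSpace ℝ F]
    {f : ℝ → F} {s : Set ℝ} (hs : Convex ℝ s) (hf : ∀ t ∈ s, HasDerivWithinAt f 0 s t)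
    {a b : ℝ} (ha : a ∈ s) (hb : b ∈ s) : f b = f a := by
  have hdist : ‖f b - f a‖ ≤ 0 * ‖b - a‖ :=
    hs.norm_image_sub_le_of_norm_hasDerivWithin_le hf (fun _ _ => norm_zero.le) ha hb
  rwa [zero_mul, norm_le_zero_iff, sub_eq_zero] at hdist

theorem mulVec_eq_of_mulVec_deriv_eq_zero {𝔸 ι κ : Type*} [Fintype ι] [NormedRing 𝔸]
    [NormedAlgebra ℝ 𝔸] {M : Matrix κ ι 𝔸} {u u' : ℝ → ι → 𝔸} {s : Set ℝ} (hs : Convex ℝ s)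
    (hu : ∀ t ∈ s, HasDerivWithinAt u (u' t) s t) (hM : ∀ t ∈ s, M *ᵥ u' t = 0)
    {a b : ℝ} (ha : a ∈ s) (hb : b ∈ s) : M *ᵥ u b = M *ᵥ u a := by
  funext i
  refine eq_of_hasDerivWithinAt_eq_zero (f := fun t => M i ⬝ᵥ u t) hs (fun t ht => ?_) ha hb
  have hrow : M i ⬝ᵥ u' t = 0 := congrFun (hM t ht) i
  exact hrow ▸ hasDerivWithinAt_const_dotProduct (M i) (hu t ht)

end Analysis

theorem constraint_propagation_general {ι κ 𝔸 : Type*} [Fintype ι] [DecidableEq ι]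
    [NormedCommRing 𝔸] [NormedAlgebra ℝ 𝔸] {E A L : Matrix ι ι 𝔸} {Q R : Matrix κ ι 𝔸}
    (hE : IsUnit E.det) (hC : ConditionC E A L Q R) (c : 𝔸) {s : Set ℝ} (hs : Convex ℝ s)
    {u u' : ℝ → ι → 𝔸} (hu : ∀ t ∈ s, HasDerivWithinAt u (u' t) s t)
    (hode : ∀ t ∈ s, E *ᵥ u' t + c • (A *ᵥ u t) + L *ᵥ u t = 0)
    {a b : ℝ} (ha : a ∈ s) (hb : b ∈ s) :
    c • (Q *ᵥ u b) + R *ᵥ u b = c • (Q *ᵥ u a) + R *ᵥ u a := by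
  simp only [← Matrix.smul_mulVec, add_assoc, ← Matrix.add_mulVec] at hode ⊢
  have hderiv : ∀ t ∈ s, (c • Q + R) *ᵥ u' t = 0 := fun t ht =>
    mulVec_eq_zero_of_mul_inv_mul_eq_zero hE (hC.smul_add_mul_inv_mul_smul_add c) (hode t ht)
  exact mulVec_eq_of_mulVec_deriv_eq_zero hs hu hderiv ha hb

/-- **Constraint propagation under condition (C).**
If `Q(ω)(A⁰)⁻¹A(ω) = 0`, `R(A⁰)⁻¹L = 0` and `Q(ω)(A⁰)⁻¹L + R(A⁰)⁻¹A(ω) = 0`, then the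
constraint `i r Q(ω)û + R û = 0` is propagated in time by `A⁰û′ + i r A(ω) û + L û = 0`. -/
theorem constraint_propagation
    (m n m1 : ℕ) (hm1 : 1 ≤ m1) (hm1m : m1 < m) (hn : 1 ≤ n)
    (A0 : Matrix (Fin m) (Fin m) ℝ) (A : Fin n → Matrix (Fin m) (Fin m) ℝ)
    (L : Matrix (Fin m) (Fin m) ℝ)
    (Q : Fin n → Matrix (Fin m1) (Fin m) ℝ) (R : Matrix (Fin m1) (Fin m) ℝ)
    (hA0inv : IsUnit A0.det)
    -- condition (C)
    (hC1 : ∀ ω : Fin n → ℝ, (∑ j, ω j ^ 2 = 1) →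
      (∑ j, ω j • Q j) * A0⁻¹ * (∑ j, ω j • A j) = 0)
    (hC2 : R * A0⁻¹ * L = 0)
    (hC3 : ∀ ω : Fin n → ℝ, (∑ j, ω j ^ 2 = 1) →
      (∑ j, ω j • Q j) * A0⁻¹ * L + R * A0⁻¹ * (∑ j, ω j • A j) = 0) :
    ∀ r : ℝ, 0 ≤ r → ∀ ω : Fin n → ℝ, (∑ j, ω j ^ 2 = 1) →
      ∀ u u' : ℝ → (Fin m → ℂ),
      (∀ t : ℝ, 0 ≤ t → HasDerivWithinAt u (u' t) (Set.Ici 0) t) →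
      (∀ t : ℝ, 0 ≤ t →
        (cmap A0).mulVec (u' t)
          + ((r : ℂ) * Complex.I) • (cmap (∑ j, ω j • A j)).mulVec (u t)
          + (cmap L).mulVec (u t) = 0) →
      (((r : ℂ) * Complex.I) • (cmap (∑ j, ω j • Q j)).mulVec (u 0)
          + (cmap R).mulVec (u 0) = 0) →
      ∀ t : ℝ, 0 ≤ t →
        ((r : ℂ) * Complex.I) • (cmap (∑ j, ω j • Q j)).mulVec (u t)
          + (cmap R).mulVec (u t) = 0 := by
  intro r _ ω hω u u' hu hode h0 t ht
  have hC : ConditionC A0 (∑ j, ω j • A j) L (∑ j, ω j • Q j) R := ⟨hC1 ω hω, hC2, hC3 ω hω⟩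
  exact (constraint_propagation_general (isUnit_det_map Complex.ofRealHom hA0inv)
    (hC.map Complex.ofRealHom hA0inv) _ (convex_Ici 0) hu hode Set.self_mem_Ici ht).trans h0
end
end
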